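/- Fix ρ ∈ (0,1) and α ∈ (0,1). Let (α_n) be a sequence in (0,1) with n·α_n → α, and let c_n be defined by Φ(−c_n) = α_n. Then (n(n−1)/2)·∫_ℝ Φ(d)^{n−2}·φ(d)·G(ρ,c_n,z)²·|φ(d) − d·Φ(−d)|·φ(z) dz → 0 as n → ∞, where d = d(ρ,c_n,z) and G(ρ,c,z) = (c + z/√ρ)/(2(1−ρ)^{3/2}). -/

import Mathlib

open MeasureTheory Filter

/-- The standard normal density. -/
noncomputable def phi (x : ℝ) : ℝ := (Real.sqrt (2 * Real.pi))⁻¹ * Real.exp (-x ^ 2 / 2)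

/-- The standard normal cumulative distribution function. -/
noncomputable def Phi (x : ℝ) : ℝ := ∫ t in Set.Iic x, phi t

/-- d(ρ,c,z) = (c + √ρ·z)/√(1−ρ). -/
noncomputable def dd (ρ c z : ℝ) : ℝ := (c + Real.sqrt ρ * z) / Real.sqrt (1 - ρ)

/-- G(ρ,c,z) = (c + z/√ρ)/(2(1−ρ)^{3/2}). -/
noncomputable def G (ρ c z : ℝ) : ℝ :=
  (c + z / Real.sqrt ρ) / (2 * (1 - ρ) ^ ((3 : ℝ) / 2))

/-- H_n(ρ,c) = ∫ Φ(d(ρ,c,z))^n φ(z) dz. -/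
noncomputable def Hn (n : ℕ) (ρ c : ℝ) : ℝ := ∫ z : ℝ, (Phi (dd ρ c z)) ^ n * phi z

/-!
Put `d = dd ρ c z`. By a Mills-type inequality, `phi d` and `|phi d - d * Phi (-d)|` are both
`O((1 + |d|) * Phi (-d))`, and `Phi d ^ n ≤ exp (-n * Phi (-d))`. Since `y ^ 2 * exp (-y)` and
`y * exp (-y)` are bounded for `y = n * Phi (-d)`, the part of the integrand that depends on `d`
alone is `O((1 + |d|) ^ 2 / n ^ 2)` and, if `phi d` is kept aside, also `O((1 + |d|) * phi d / n)`.
After multiplication by `phi z`, the first bound is not small near `z = 0`, nor the second near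
`z = -√ρ * c`, but their geometric mean, at most of order `(1 + |d|) ^ 2 * √(n * phi d) / n ^ 2`, is
small everywhere: the identity `phi (dd ρ c z) * phi z = phi (dd ρ z c) * phi c` gives
`√(n * phi d) * phi z = √(n * phi c) * √(phi (dd ρ z c) * phi z)`,
where the last factor is a nondegenerate Gaussian in `(c, z)` and `n * phi c = O(1 + |c|)`, again by
the Mills-type inequality. Integration over `z` leaves `O(exp (-η * c ^ 2))` for some `η > 0`, and
`c → ∞` because `Phi (-c) → 0`.
-/

lemma pow_le_factorial_div_mul_exp {ε x : ℝ} (hε : 0 < ε) (hx : 0 ≤ x) (k : ℕ) :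
    x ^ k ≤ k.factorial / ε ^ k * Real.exp (ε * x) := by
  have h := Real.pow_div_factorial_le_exp (ε * x) (by positivity) k
  rwa [mul_pow, div_le_iff₀' (by positivity), ← le_div_iff₀' (by positivity),
    mul_div_right_comm] at h

lemma mul_mul_exp_neg_le_mul_sqrt {a m y : ℝ} (ha : 0 ≤ a) (hm : 1 ≤ m) (hy : 0 ≤ y)
    (h : a ≤ m * y) : a * y * Real.exp (-y) ≤ m * √a := by
  have hsqrt : √a ≤ m * (1 + y) / 2 :=
    Real.sqrt_le_iff.2 ⟨by positivity, by nlinarith [sq_nonneg (m * (1 - y))]⟩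
  have hexp : √a * y ≤ m * Real.exp y := by
    calc √a * y ≤ m * (1 + y) / 2 * y := by gcongr
      _ ≤ m * (1 + y + y ^ 2 / 2) := by nlinarith
      _ ≤ m * Real.exp y := by gcongr; exact Real.quadratic_le_exp_of_nonneg hy
  calc a * y * Real.exp (-y) = √a * (√a * y) * Real.exp (-y) := by
        rw [← mul_assoc, Real.mul_self_sqrt ha]
    _ ≤ √a * (m * Real.exp y) * Real.exp (-y) := by gcongr
    _ = m * √a := by rw [Real.exp_neg]; field_simp

lemma add_sq_le_mul_sq_add_sq (a b x y : ℝ) :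
    (a * x + b * y) ^ 2 ≤ (a ^ 2 + b ^ 2) * (x ^ 2 + y ^ 2) := by
  linarith [sq_nonneg (a * y - b * x)]

section StandardNormal

lemma phi_eq_gaussianPDFReal : phi = ProbabilityTheory.gaussianPDFReal 0 1 := by
  funext x
  simp [phi, ProbabilityTheory.gaussianPDFReal]

lemma integrable_phi : Integrable phi :=
  phi_eq_gaussianPDFReal ▸ ProbabilityTheory.integrable_gaussianPDFReal 0 1

lemma integral_phi : ∫ x, phi x = 1 :=
  phi_eq_gaussianPDFReal ▸ ProbabilityTheory.integral_gaussianPDFReal_eq_one 0 one_ne_zero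

lemma phi_pos (x : ℝ) : 0 < phi x :=
  phi_eq_gaussianPDFReal ▸ ProbabilityTheory.gaussianPDFReal_pos 0 1 x one_ne_zero

lemma phi_neg (x : ℝ) : phi (-x) = phi x := by simp [phi]

lemma phi_mul_phi (x y : ℝ) :
    phi x * phi y = (2 * Real.pi)⁻¹ * Real.exp (-(x ^ 2 + y ^ 2) / 2) := by
  unfold phi
  rw [mul_mul_mul_comm, ← mul_inv, Real.mul_self_sqrt (by positivity), ← Real.exp_add]
  ring_nf

lemma exp_neg_mul_phi_le_phi {x t a : ℝ} (h : t ^ 2 ≤ x ^ 2 + 2 * a) :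
    Real.exp (-a) * phi x ≤ phi t := by
  unfold phi
  rw [mul_left_comm, ← Real.exp_add]
  gcongr
  linarith

lemma Phi_nonneg (x : ℝ) : 0 ≤ Phi x := integral_nonneg fun t => (phi_pos t).le

lemma setIntegral_phi_le_Phi {s : Set ℝ} {x : ℝ} (hs : s ⊆ Set.Iic x) :
    ∫ t in s, phi t ≤ Phi x :=
  setIntegral_mono_set integrable_phi.integrableOn (ae_of_all _ fun t => (phi_pos t).le)
    hs.eventuallyLE

lemma monotone_Phi : Monotone Phi := fun _ _ h => setIntegral_phi_le_Phi (Set.Iic_subset_Iic.2 h)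

lemma Phi_add_Phi_neg (x : ℝ) : Phi x + Phi (-x) = 1 := by
  have h : Phi (-x) = ∫ t in Set.Ioi x, phi t := by
    simpa only [Phi, phi_neg, neg_neg] using integral_comp_neg_Iic (-x) phi
  rw [h, Phi, intervalIntegral.integral_Iic_add_Ioi integrable_phi.integrableOn
    integrable_phi.integrableOn, integral_phi]

lemma Phi_pow_sub_le_exp (x : ℝ) (n k : ℕ) :
    Phi x ^ (n - k) ≤ Real.exp (k - n * Phi (-x)) := by
  have hΦ := Phi_add_Phi_neg x
  have hle : Phi x ≤ Real.exp (-Phi (-x)) := by linarith [Real.add_one_le_exp (-Phi (-x))]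
  have hcast : (n : ℝ) ≤ (n - k : ℕ) + k := by exact_mod_cast le_tsub_add
  calc Phi x ^ (n - k) ≤ Real.exp (-Phi (-x)) ^ (n - k) :=
        pow_le_pow_left₀ (Phi_nonneg x) hle _
    _ = Real.exp ((n - k : ℕ) * -Phi (-x)) := (Real.exp_nat_mul _ _).symm
    _ ≤ Real.exp (k - n * Phi (-x)) := by
        gcongr
        nlinarith [Phi_nonneg x, Phi_nonneg (-x), (k.cast_nonneg : (0 : ℝ) ≤ k)]

lemma phi_le_mul_Phi_neg (x : ℝ) : phi x ≤ Real.exp (3 / 2) * (1 + |x|) * Phi (-x) := by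
  -- On the interval of length `h` to the left of `-x`, `phi` is at least `exp (-3 / 2) * phi x`.
  set h : ℝ := (1 + |x|)⁻¹
  have hh : 0 < h := by positivity
  have hmul : h * (1 + |x|) = 1 := inv_mul_cancel₀ (by positivity)
  have hphi : ∀ t ∈ Set.Ioc (-x - h) (-x), Real.exp (-(3 / 2)) * phi x ≤ phi t := by
    intro t ht
    have habs : |t| ≤ |x| + h := by
      rw [abs_le]
      constructor <;> linarith [ht.1, ht.2, neg_abs_le x, le_abs_self x]
    have hsq : |t| ^ 2 ≤ (|x| + h) ^ 2 := by gcongr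
    rw [sq_abs] at hsq
    exact exp_neg_mul_phi_le_phi (by nlinarith [sq_abs x, abs_nonneg x])
  have hint : h * (Real.exp (-(3 / 2)) * phi x) ≤ Phi (-x) := by
    calc h * (Real.exp (-(3 / 2)) * phi x)
        = ∫ _ in Set.Ioc (-x - h) (-x), Real.exp (-(3 / 2)) * phi x := by simp [hh.le]
      _ ≤ ∫ t in Set.Ioc (-x - h) (-x), phi t :=
          setIntegral_mono_on (integrableOn_const (by simp)) integrable_phi.integrableOn
            measurableSet_Ioc hphi
      _ ≤ Phi (-x) := setIntegral_phi_le_Phi Set.Ioc_subset_Iic_self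
  calc phi x = Real.exp (3 / 2) * (1 + |x|) * (h * (Real.exp (-(3 / 2)) * phi x)) := by
        rw [Real.exp_neg]
        field_simp
        linear_combination (-phi x) * hmul
    _ ≤ Real.exp (3 / 2) * (1 + |x|) * Phi (-x) := by gcongr

lemma Phi_pos (x : ℝ) : 0 < Phi x := by
  have h := (phi_pos (-x)).trans_le (phi_le_mul_Phi_neg (-x))
  rw [neg_neg] at h
  exact pos_of_mul_pos_right h (by positivity)

lemma tendsto_atTop_of_tendsto_Phi_neg {ι : Type*} {l : Filter ι} {c : ι → ℝ}
    (h : Tendsto (fun i => Phi (-(c i))) l (nhds 0)) : Tendsto c l atTop :=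
  tendsto_atTop.2 fun M => (h.eventually_lt_const (Phi_pos (-M))).mono fun _ hi =>
    (neg_lt_neg_iff.1 (monotone_Phi.reflect_lt hi)).le

lemma abs_phi_sub_mul_Phi_neg_le (x : ℝ) :
    |phi x - x * Phi (-x)| ≤ 2 * (Real.exp (3 / 2) * (1 + |x|) * Phi (-x)) := by
  have hΦ := Phi_nonneg (-x)
  have hx : |x| ≤ Real.exp (3 / 2) * (1 + |x|) := by
    nlinarith [Real.one_le_exp (show (0 : ℝ) ≤ 3 / 2 by norm_num), abs_nonneg x]
  calc |phi x - x * Phi (-x)| ≤ |phi x| + |x * Phi (-x)| := abs_sub _ _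
    _ = phi x + |x| * Phi (-x) := by rw [abs_mul, abs_of_pos (phi_pos x), abs_of_nonneg hΦ]
    _ ≤ Real.exp (3 / 2) * (1 + |x|) * Phi (-x) + Real.exp (3 / 2) * (1 + |x|) * Phi (-x) := by
        gcongr
        exact phi_le_mul_Phi_neg x
    _ = 2 * (Real.exp (3 / 2) * (1 + |x|) * Phi (-x)) := by ring

lemma sq_mul_Phi_pow_mul_phi_mul_abs_le (n : ℕ) (x : ℝ) :
    (n : ℝ) ^ 2 * (Phi x ^ (n - 2) * phi x * |phi x - x * Phi (-x)|) ≤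
      2 * Real.exp 5 * (1 + |x|) ^ 2 * √(n * phi x) := by
  set m := Real.exp (3 / 2) * (1 + |x|)
  have hm : 1 ≤ m := one_le_mul_of_one_le_of_one_le (Real.one_le_exp (by norm_num)) (by simp)
  have hφ := phi_pos x
  have hΦ := Phi_nonneg (-x)
  have hmills : n * phi x ≤ m * (n * Phi (-x)) := by
    rw [mul_left_comm]
    gcongr
    exact phi_le_mul_Phi_neg x
  have hm2 : Real.exp 2 * m ^ 2 = Real.exp 5 * (1 + |x|) ^ 2 := by
    rw [mul_pow, ← Real.exp_nat_mul, ← mul_assoc, ← Real.exp_add]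
    norm_num
  calc (n : ℝ) ^ 2 * (Phi x ^ (n - 2) * phi x * |phi x - x * Phi (-x)|)
      ≤ (n : ℝ) ^ 2 * (Real.exp (2 - n * Phi (-x)) * phi x * (2 * (m * Phi (-x)))) := by
        gcongr
        · exact Phi_pow_sub_le_exp x n 2
        · exact abs_phi_sub_mul_Phi_neg_le x
    _ = 2 * Real.exp 2 * m * (n * phi x * (n * Phi (-x)) * Real.exp (-(n * Phi (-x)))) := by
        rw [sub_eq_add_neg, Real.exp_add]
        ring
    _ ≤ 2 * Real.exp 2 * m * (m * √(n * phi x)) := by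
        gcongr _ * ?_
        exact mul_mul_exp_neg_le_mul_sqrt (by positivity) hm (by positivity) hmills
    _ = 2 * Real.exp 5 * (1 + |x|) ^ 2 * √(n * phi x) := by
        linear_combination 2 * √(n * phi x) * hm2

lemma sqrt_mul_phi_le {a B c : ℝ} (ha : 0 ≤ a) (h : a * Phi (-c) ≤ B) :
    √(a * phi c) ≤ (1 + 2 * Real.exp (3 / 2) * B) * (1 + c ^ 2) := by
  have haφ : 0 ≤ a * phi c := mul_nonneg ha (phi_pos c).le
  have habs : 1 + |c| ≤ 2 * (1 + c ^ 2) := by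
    nlinarith [sq_abs c, sq_nonneg (1 - |c|)]
  have hmills : a * phi c ≤ Real.exp (3 / 2) * (2 * (1 + c ^ 2)) * B := by
    calc a * phi c ≤ a * (Real.exp (3 / 2) * (1 + |c|) * Phi (-c)) := by
          gcongr
          exact phi_le_mul_Phi_neg c
      _ = Real.exp (3 / 2) * (1 + |c|) * (a * Phi (-c)) := by ring
      _ ≤ Real.exp (3 / 2) * (2 * (1 + c ^ 2)) * B :=
          mul_le_mul (by gcongr) h (mul_nonneg ha (Phi_nonneg _)) (by positivity)
  calc √(a * phi c) ≤ 1 + a * phi c := Real.sqrt_le_iff.2 ⟨by positivity, by nlinarith⟩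
    _ ≤ (1 + c ^ 2) + Real.exp (3 / 2) * (2 * (1 + c ^ 2)) * B :=
        add_le_add (by linarith [sq_nonneg c]) hmills
    _ = (1 + 2 * Real.exp (3 / 2) * B) * (1 + c ^ 2) := by ring

end StandardNormal

section LinearForms

variable {ρ : ℝ}

lemma dd_sq_add_sq_comm (hρ : ρ ∈ Set.Ico (0 : ℝ) 1) (c z : ℝ) :
    dd ρ c z ^ 2 + z ^ 2 = dd ρ z c ^ 2 + c ^ 2 := by
  have h : 0 < 1 - ρ := sub_pos.2 hρ.2
  unfold dd
  rw [div_pow, div_pow, Real.sq_sqrt h.le]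
  field_simp
  linear_combination (z ^ 2 - c ^ 2) * Real.sq_sqrt hρ.1

-- The two ways of conditioning a standard bivariate normal density with correlation `-√ρ`.
lemma phi_dd_mul_phi_comm (hρ : ρ ∈ Set.Ico (0 : ℝ) 1) (c z : ℝ) :
    phi (dd ρ c z) * phi z = phi (dd ρ z c) * phi c := by
  rw [phi_mul_phi, phi_mul_phi, dd_sq_add_sq_comm hρ]

lemma mul_sq_add_sq_le_dd_sq_add_sq (hρ : ρ ∈ Set.Ico (0 : ℝ) 1) (c z : ℝ) :
    ρ / 3 * (c ^ 2 + z ^ 2) ≤ dd ρ z c ^ 2 + z ^ 2 := by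
  obtain ⟨h0, h1⟩ := hρ
  have hdd : (z + √ρ * c) ^ 2 ≤ dd ρ z c ^ 2 := by
    rw [dd, div_pow, Real.sq_sqrt (sub_pos.2 h1).le]
    exact le_div_self (sq_nonneg _) (sub_pos.2 h1) (by linarith)
  nlinarith [Real.sq_sqrt h0, sq_nonneg (2 * z + √ρ * c), sq_nonneg z]

lemma sqrt_phi_dd_mul_phi_le (hρ : ρ ∈ Set.Ico (0 : ℝ) 1) (c z : ℝ) :
    √(phi (dd ρ z c) * phi z) ≤ Real.exp (-(ρ / 12 * (c ^ 2 + z ^ 2))) := by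
  refine Real.sqrt_le_iff.2 ⟨(Real.exp_pos _).le, ?_⟩
  have hpi : (2 * Real.pi)⁻¹ ≤ 1 := inv_le_one_of_one_le₀ (by linarith [Real.pi_gt_three])
  calc phi (dd ρ z c) * phi z
      = (2 * Real.pi)⁻¹ * Real.exp (-(dd ρ z c ^ 2 + z ^ 2) / 2) := phi_mul_phi _ _
    _ ≤ Real.exp (-(dd ρ z c ^ 2 + z ^ 2) / 2) :=
        mul_le_of_le_one_left (Real.exp_pos _).le hpi
    _ ≤ Real.exp (-(ρ / 12 * (c ^ 2 + z ^ 2))) ^ 2 := by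
        rw [← Real.exp_nat_mul]
        gcongr
        push_cast
        linarith [mul_sq_add_sq_le_dd_sq_add_sq hρ c z]

lemma sqrt_mul_phi_dd_mul_phi_le (hρ : ρ ∈ Set.Ico (0 : ℝ) 1) {a : ℝ} (ha : 0 ≤ a) (c z : ℝ) :
    √(a * phi (dd ρ c z)) * phi z ≤ √(a * phi c) * Real.exp (-(ρ / 12 * (c ^ 2 + z ^ 2))) := by
  have hc := phi_pos c
  have hd := phi_pos (dd ρ c z)
  calc √(a * phi (dd ρ c z)) * phi z = √(a * phi (dd ρ c z) * phi z ^ 2) := by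
        rw [Real.sqrt_mul (x := a * phi (dd ρ c z)) (by positivity), Real.sqrt_sq (phi_pos z).le]
    _ = √(a * phi c * (phi (dd ρ z c) * phi z)) := by
        congr 1
        linear_combination a * phi z * phi_dd_mul_phi_comm hρ c z
    _ = √(a * phi c) * √(phi (dd ρ z c) * phi z) := Real.sqrt_mul (by positivity) _
    _ ≤ √(a * phi c) * Real.exp (-(ρ / 12 * (c ^ 2 + z ^ 2))) := by
        gcongr
        exact sqrt_phi_dd_mul_phi_le hρ c z

lemma exists_dd_sq_le (ρ : ℝ) : ∃ K, 0 ≤ K ∧ ∀ c z, dd ρ c z ^ 2 ≤ K * (c ^ 2 + z ^ 2) := by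
  refine ⟨(√(1 - ρ))⁻¹ ^ 2 + (√ρ / √(1 - ρ)) ^ 2, by positivity, fun c z => ?_⟩
  convert add_sq_le_mul_sq_add_sq (√(1 - ρ))⁻¹ (√ρ / √(1 - ρ)) c z using 2
  rw [dd]
  ring

lemma exists_G_sq_le (ρ : ℝ) : ∃ K, 0 ≤ K ∧ ∀ c z, G ρ c z ^ 2 ≤ K * (c ^ 2 + z ^ 2) := by
  set w := 2 * (1 - ρ) ^ ((3 : ℝ) / 2)
  refine ⟨w⁻¹ ^ 2 + ((√ρ)⁻¹ / w) ^ 2, by positivity, fun c z => ?_⟩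
  convert add_sq_le_mul_sq_add_sq w⁻¹ ((√ρ)⁻¹ / w) c z using 2
  rw [G]
  ring

end LinearForms

section ApproximationError

variable {ρ : ℝ}

/-- The integrand of the approximation error at sample size `n`; the exponent `n - 2` is truncated
at `0`. -/
noncomputable def errorIntegrand (n : ℕ) (ρ c z : ℝ) : ℝ :=
  (Phi (dd ρ c z)) ^ (n - 2) * phi (dd ρ c z) * (G ρ c z) ^ 2 *
    |phi (dd ρ c z) - dd ρ c z * Phi (-(dd ρ c z))| * phi z

lemma errorIntegrand_nonneg (n : ℕ) (ρ c z : ℝ) : 0 ≤ errorIntegrand n ρ c z := by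
  have hΦ := Phi_nonneg (dd ρ c z)
  have hd := phi_pos (dd ρ c z)
  have hz := phi_pos z
  unfold errorIntegrand
  positivity

lemma sq_mul_errorIntegrand_le (hρ : ρ ∈ Set.Ico (0 : ℝ) 1) (n : ℕ) (c z : ℝ) :
    (n : ℝ) ^ 2 * errorIntegrand n ρ c z ≤
      2 * Real.exp 5 * ((1 + |dd ρ c z|) ^ 2 * G ρ c z ^ 2 * √(n * phi c)) *
        Real.exp (-(ρ / 12 * (c ^ 2 + z ^ 2))) := by
  set d := dd ρ c z
  have hz := phi_pos z
  calc (n : ℝ) ^ 2 * errorIntegrand n ρ c z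
      = (n : ℝ) ^ 2 * (Phi d ^ (n - 2) * phi d * |phi d - d * Phi (-d)|) *
          (G ρ c z ^ 2 * phi z) := by
        rw [errorIntegrand]
        ring
    _ ≤ 2 * Real.exp 5 * (1 + |d|) ^ 2 * √(n * phi d) * (G ρ c z ^ 2 * phi z) := by
        gcongr ?_ * _
        exact sq_mul_Phi_pow_mul_phi_mul_abs_le n d
    _ = 2 * Real.exp 5 * ((1 + |d|) ^ 2 * G ρ c z ^ 2) * (√(n * phi d) * phi z) := by ring
    _ ≤ 2 * Real.exp 5 * ((1 + |d|) ^ 2 * G ρ c z ^ 2) *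
          (√(n * phi c) * Real.exp (-(ρ / 12 * (c ^ 2 + z ^ 2)))) := by
        gcongr _ * ?_
        exact sqrt_mul_phi_dd_mul_phi_le hρ n.cast_nonneg c z
    _ = _ := by ring

lemma exists_one_add_abs_dd_sq_mul_G_sq_mul_sqrt_le (ρ B : ℝ) :
    ∃ K, 0 ≤ K ∧ ∀ (n : ℕ) (c z : ℝ), n * Phi (-c) ≤ B →
      (1 + |dd ρ c z|) ^ 2 * G ρ c z ^ 2 * √(n * phi c) ≤ K * (1 + (c ^ 2 + z ^ 2)) ^ 3 := by
  obtain ⟨Kd, hKd, hd⟩ := exists_dd_sq_le ρ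
  obtain ⟨KG, hKG, hG⟩ := exists_G_sq_le ρ
  refine ⟨2 * (1 + Kd) * KG * (1 + 2 * Real.exp (3 / 2) * |B|), by positivity, fun n c z h => ?_⟩
  have hd' : (1 + |dd ρ c z|) ^ 2 ≤ 2 * (1 + Kd) * (1 + (c ^ 2 + z ^ 2)) := by
    nlinarith [hd c z, sq_abs (dd ρ c z), sq_nonneg (1 - |dd ρ c z|)]
  have hG' : G ρ c z ^ 2 ≤ KG * (1 + (c ^ 2 + z ^ 2)) := by linarith [hG c z]
  have hn : √(n * phi c) ≤ (1 + 2 * Real.exp (3 / 2) * |B|) * (1 + (c ^ 2 + z ^ 2)) :=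
    (sqrt_mul_phi_le n.cast_nonneg (h.trans (le_abs_self B))).trans <| by
      gcongr
      exact le_add_of_nonneg_right (sq_nonneg z)
  calc (1 + |dd ρ c z|) ^ 2 * G ρ c z ^ 2 * √(n * phi c)
      ≤ 2 * (1 + Kd) * (1 + (c ^ 2 + z ^ 2)) * (KG * (1 + (c ^ 2 + z ^ 2))) *
          ((1 + 2 * Real.exp (3 / 2) * |B|) * (1 + (c ^ 2 + z ^ 2))) := by gcongr
    _ = _ := by ring

lemma exists_sq_mul_errorIntegrand_le_mul_exp (hρ : ρ ∈ Set.Ioo (0 : ℝ) 1) (B : ℝ) :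
    ∃ K, ∀ (n : ℕ) (c z : ℝ), n * Phi (-c) ≤ B →
      (n : ℝ) ^ 2 * errorIntegrand n ρ c z ≤
        K * Real.exp (-(ρ / 24) * c ^ 2) * Real.exp (-(ρ / 24) * z ^ 2) := by
  obtain ⟨K, hK, hpoly⟩ := exists_one_add_abs_dd_sq_mul_G_sq_mul_sqrt_le ρ B
  have hε : 0 < ρ / 24 := div_pos hρ.1 (by norm_num)
  set A := Nat.factorial 3 / (ρ / 24) ^ 3
  refine ⟨2 * Real.exp 5 * K * A * Real.exp (ρ / 24), fun n c z h => ?_⟩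
  set u := c ^ 2 + z ^ 2 with hu
  calc (n : ℝ) ^ 2 * errorIntegrand n ρ c z
      ≤ 2 * Real.exp 5 * ((1 + |dd ρ c z|) ^ 2 * G ρ c z ^ 2 * √(n * phi c)) *
          Real.exp (-(ρ / 12 * u)) := sq_mul_errorIntegrand_le (Set.Ioo_subset_Ico_self hρ) n c z
    _ ≤ 2 * Real.exp 5 * (K * (A * Real.exp (ρ / 24 * (1 + u)))) * Real.exp (-(ρ / 12 * u)) := by
        gcongr _ * ?_ * _
        refine (hpoly n c z h).trans ?_
        gcongr
        exact pow_le_factorial_div_mul_exp hε (by positivity) 3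
    _ = 2 * Real.exp 5 * K * A * (Real.exp (ρ / 24 * (1 + u)) * Real.exp (-(ρ / 12 * u))) := by
        ring
    _ = 2 * Real.exp 5 * K * A *
          (Real.exp (ρ / 24) * Real.exp (-(ρ / 24) * c ^ 2) * Real.exp (-(ρ / 24) * z ^ 2)) := by
        simp only [← Real.exp_add, hu]
        ring_nf
    _ = _ := by ring

lemma exists_sq_mul_integral_errorIntegrand_le (hρ : ρ ∈ Set.Ioo (0 : ℝ) 1) (B : ℝ) :
    ∃ K, ∀ (n : ℕ) (c : ℝ), n * Phi (-c) ≤ B →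
      (n : ℝ) ^ 2 * ∫ z, errorIntegrand n ρ c z ≤ K * Real.exp (-(ρ / 24) * c ^ 2) := by
  obtain ⟨K, hK⟩ := exists_sq_mul_errorIntegrand_le_mul_exp hρ B
  refine ⟨K * ∫ z : ℝ, Real.exp (-(ρ / 24) * z ^ 2), fun n c h => ?_⟩
  have hint : Integrable fun z : ℝ => Real.exp (-(ρ / 24) * z ^ 2) :=
    integrable_exp_neg_mul_sq (div_pos hρ.1 (by norm_num))
  calc (n : ℝ) ^ 2 * ∫ z, errorIntegrand n ρ c z
      = ∫ z, (n : ℝ) ^ 2 * errorIntegrand n ρ c z := (integral_const_mul _ _).symm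
    _ ≤ ∫ z, K * Real.exp (-(ρ / 24) * c ^ 2) * Real.exp (-(ρ / 24) * z ^ 2) :=
        integral_mono_of_nonneg
          (ae_of_all _ fun z => mul_nonneg (sq_nonneg _) (errorIntegrand_nonneg n ρ c z))
          (hint.const_mul _) (ae_of_all _ fun z => hK n c z h)
    _ = _ := by
        rw [integral_const_mul]
        ring

lemma tendsto_atTop_of_isBoundedUnder_mul_Phi_neg {c : ℕ → ℝ}
    (hc : IsBoundedUnder (· ≤ ·) atTop fun n : ℕ => (n : ℝ) * Phi (-(c n))) :
    Tendsto c atTop atTop := by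
  obtain ⟨B, hB⟩ := hc.eventually_le
  refine tendsto_atTop_of_tendsto_Phi_neg <|
    squeeze_zero' (.of_forall fun n => Phi_nonneg _) ?_ (tendsto_const_div_atTop_nhds_zero_nat B)
  filter_upwards [hB, eventually_gt_atTop 0] with n hn hpos
  exact (le_div_iff₀' (by exact_mod_cast hpos)).2 hn

theorem approximation_error_tendsto_zero_general (hρ : ρ ∈ Set.Ioo (0 : ℝ) 1) {c : ℕ → ℝ}
    (hc : IsBoundedUnder (· ≤ ·) atTop fun n : ℕ => (n : ℝ) * Phi (-(c n))) :
    Tendsto (fun n : ℕ => ((n : ℝ) * ((n : ℝ) - 1) / 2) * ∫ z, errorIntegrand n ρ (c n) z)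
      atTop (nhds 0) := by
  obtain ⟨B, hB⟩ := hc.eventually_le
  obtain ⟨K, hK⟩ := exists_sq_mul_integral_errorIntegrand_le hρ B
  have hint (n : ℕ) : 0 ≤ ∫ z, errorIntegrand n ρ (c n) z :=
    integral_nonneg (errorIntegrand_nonneg n ρ (c n))
  have hexp : Tendsto (fun n => K * Real.exp (-(ρ / 24) * c n ^ 2)) atTop (nhds 0) := by
    have hsq : Tendsto (fun n => c n ^ 2) atTop atTop :=
      (tendsto_pow_atTop two_ne_zero).comp (tendsto_atTop_of_isBoundedUnder_mul_Phi_neg hc)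
    have hε : -(ρ / 24) < 0 := neg_lt_zero.2 (div_pos hρ.1 (by norm_num))
    simpa only [mul_zero, Function.comp_apply] using
      (Real.tendsto_exp_atBot.comp (hsq.const_mul_atTop_of_neg hε)).const_mul K
  simp only [← Nat.cast_choose_two]
  refine squeeze_zero' (.of_forall fun n => mul_nonneg (Nat.cast_nonneg _) (hint n)) ?_ hexp
  filter_upwards [hB] with n hn
  calc (n.choose 2 : ℝ) * ∫ z, errorIntegrand n ρ (c n) z
      ≤ (n : ℝ) ^ 2 * ∫ z, errorIntegrand n ρ (c n) z := by
        gcongr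
        · exact hint n
        · exact_mod_cast Nat.choose_le_pow n 2
    _ ≤ K * Real.exp (-(ρ / 24) * c n ^ 2) := hK n (c n) hn

end ApproximationError

theorem approximation_error_tendsto_zero
    (ρ : ℝ) (hρ : ρ ∈ Set.Ioo (0:ℝ) 1) (α : ℝ) (hα : α ∈ Set.Ioo (0:ℝ) 1)
    (αseq : ℕ → ℝ) (hαseq : ∀ n, αseq n ∈ Set.Ioo (0:ℝ) 1)
    (hlim : Tendsto (fun n : ℕ => (n : ℝ) * αseq n) atTop (nhds α))
    (c : ℕ → ℝ) (hc : ∀ n, Phi (-(c n)) = αseq n) :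
    Tendsto (fun n : ℕ =>
        ((n : ℝ) * ((n : ℝ) - 1) / 2) *
          ∫ z : ℝ, (Phi (dd ρ (c n) z)) ^ (n - 2) * phi (dd ρ (c n) z) *
            (G ρ (c n) z) ^ 2 *
            |phi (dd ρ (c n) z) - dd ρ (c n) z * Phi (-(dd ρ (c n) z))| * phi z)
      atTop (nhds 0) := by
  refine approximation_error_tendsto_zero_general hρ ?_
  simpa only [hc] using hlim.isBoundedUnder_le
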